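/- Let η > 0 and let ω ≥ 1 be an integer. Let f : (0,η] × ℝ → ℝ be bounded, 2π-periodic in the second variable, continuously differentiable, with f(η,θ) = 0 for all θ, not Lebesgue-almost everywhere zero on (0,η] × [0,2π], and such that ∫₀^{2π} ∫₀^{η} ((∂_ρ f)² + ω² sinh(ρ)^{-2} (∂_θ f)²) · ω^{-1} sinh(ρ) dρ dθ < ∞. Then (1/4) · ∫₀^{2π} ∫₀^{η} f² · ω^{-1} sinh(ρ) dρ dθ < ∫₀^{2π} ∫₀^{η} ((∂_ρ f)² + ω² sinh(ρ)^{-2} (∂_θ f)²) · ω^{-1} sinh(ρ) dρ dθ. (This is the variational form of the statement that the smallest eigenvalue of the Dirichlet laplacian on the model hyperbolic cone is strictly bigger than 1/4.) -/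

import Mathlib

open MeasureTheory Filter Real

/-!
For a weight `h` with derivative `h'`, a function `g` vanishing at the right end of an interval and
a constant `c ≥ 0`, integrating `0 ≤ h (g' + c g)² = h g'² + (c h g²)' - (c h' - c² h) g²`
gives `∫ (c h' - c² h) g² ≤ ∫ h g'²`: the boundary term `-c h g²` at the left end has the
favourable sign, so the left end may tend to the apex of the cone whatever `g` does there. On the
rays of the cone `h = sinh / ω`, and `c = 1/2` turns the left-hand weight into
`(1/4) sinh / ω + e^{-ρ} / (2ω)`; the second summand makes the inequality strict.
-/

section WeightedInequality

open Set
open scoped ENNReal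

variable {a b c : ℝ} {h h' g : ℝ → ℝ}

lemma integral_mul_sq_le_integral_mul_deriv_sq (hab : a ≤ b) (hc : 0 ≤ c)
    (hh : ∀ r ∈ Icc a b, HasDerivAt h (h' r) r) (hh' : ContinuousOn h' (Icc a b))
    (h_nonneg : ∀ r ∈ Icc a b, 0 ≤ h r) (hg : ContinuousOn g (Icc a b))
    (hg' : ∀ r ∈ Ioo a b, DifferentiableAt ℝ g r) (hgb : g b = 0)
    (hint : IntegrableOn (fun r ↦ h r * deriv g r ^ 2) (Ioc a b)) :
    ∫ r in Ioc a b, (c * h' r - c ^ 2 * h r) * g r ^ 2 ≤ ∫ r in Ioc a b, h r * deriv g r ^ 2 := by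
  have hh_cont : ContinuousOn h (Icc a b) := fun r hr ↦ (hh r hr).continuousAt.continuousWithinAt
  have hint_pot : IntegrableOn (fun r ↦ (c * h' r - c ^ 2 * h r) * g r ^ 2) (Ioc a b) :=
    (ContinuousOn.integrableOn_Icc (by fun_prop)).mono_set Ioc_subset_Icc_self
  have hderiv : ∀ r ∈ Ioo a b, HasDerivAt (fun r ↦ -c * (h r * g r ^ 2))
      (-c * (h' r * g r ^ 2 + h r * (2 * g r * deriv g r))) r := fun r hr ↦ by
    simpa using ((hh r (Ioo_subset_Icc_self hr)).mul ((hg' r hr).hasDerivAt.pow 2)).const_mul (-c)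
  have hsquare : ∀ r ∈ Ioo a b, -c * (h' r * g r ^ 2 + h r * (2 * g r * deriv g r)) ≤
      h r * deriv g r ^ 2 - (c * h' r - c ^ 2 * h r) * g r ^ 2 := fun r hr ↦ by
    have := mul_nonneg (h_nonneg r (Ioo_subset_Icc_self hr)) (sq_nonneg (deriv g r + c * g r))
    linarith
  have hboundary : 0 ≤ c * (h a * g a ^ 2) :=
    mul_nonneg hc (mul_nonneg (h_nonneg a (left_mem_Icc.2 hab)) (sq_nonneg _))
  have hFTC := intervalIntegral.sub_le_integral_of_hasDeriv_right_of_le hab (by fun_prop)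
    (fun r hr ↦ (hderiv r hr).hasDerivWithinAt)
    ((integrableOn_Icc_iff_integrableOn_Ioc enorm_ne_top).2 (hint.sub hint_pot)) hsquare
  rw [intervalIntegral.integral_of_le hab, integral_sub' hint hint_pot, hgb] at hFTC
  linarith

lemma setLIntegral_Icc_mul_sq_le (hab : a ≤ b) (hc : 0 ≤ c)
    (hh : ∀ r ∈ Icc a b, HasDerivAt h (h' r) r) (hh' : ContinuousOn h' (Icc a b))
    (h_nonneg : ∀ r ∈ Icc a b, 0 ≤ h r) (hpot : ∀ r ∈ Icc a b, c * h r ≤ h' r)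
    (hg : ContinuousOn g (Icc a b)) (hg' : ∀ r ∈ Ioo a b, DifferentiableAt ℝ g r) (hgb : g b = 0) :
    ∫⁻ r in Ioc a b, .ofReal ((c * h' r - c ^ 2 * h r) * g r ^ 2) ≤
      ∫⁻ r in Ioc a b, .ofReal (h r * deriv g r ^ 2) := by
  have hh_cont : ContinuousOn h (Icc a b) := fun r hr ↦ (hh r hr).continuousAt.continuousWithinAt
  have henergy_nonneg : 0 ≤ᵐ[volume.restrict (Ioc a b)] fun r ↦ h r * deriv g r ^ 2 := by
    filter_upwards [ae_restrict_mem measurableSet_Ioc] with r hr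
    exact mul_nonneg (h_nonneg r (Ioc_subset_Icc_self hr)) (sq_nonneg _)
  have hpot_nonneg :
      0 ≤ᵐ[volume.restrict (Ioc a b)] fun r ↦ (c * h' r - c ^ 2 * h r) * g r ^ 2 := by
    filter_upwards [ae_restrict_mem measurableSet_Ioc] with r hr
    have := mul_nonneg hc (sub_nonneg.2 (hpot r (Ioc_subset_Icc_self hr)))
    exact mul_nonneg (by linarith) (sq_nonneg _)
  have hint_pot : IntegrableOn (fun r ↦ (c * h' r - c ^ 2 * h r) * g r ^ 2) (Ioc a b) :=
    (ContinuousOn.integrableOn_Icc (by fun_prop)).mono_set Ioc_subset_Icc_self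
  have henergy_meas : AEStronglyMeasurable (fun r ↦ h r * deriv g r ^ 2)
      (volume.restrict (Ioc a b)) :=
    ((hh_cont.mono Ioc_subset_Icc_self).aestronglyMeasurable measurableSet_Ioc).mul
      ((measurable_deriv g).pow_const 2).aestronglyMeasurable
  by_cases hfin : ∫⁻ r in Ioc a b, .ofReal (h r * deriv g r ^ 2) = ∞
  · exact hfin ▸ le_top
  have hint := (lintegral_ofReal_ne_top_iff_integrable henergy_meas henergy_nonneg).1 hfin
  rw [← ofReal_integral_eq_lintegral_ofReal hint_pot hpot_nonneg,
    ← ofReal_integral_eq_lintegral_ofReal hint henergy_nonneg]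
  exact ENNReal.ofReal_le_ofReal
    (integral_mul_sq_le_integral_mul_deriv_sq hab hc hh hh' h_nonneg hg hg' hgb hint)

lemma setLIntegral_Ioc_le_of_forall {F : ℝ → ℝ≥0∞} {M : ℝ≥0∞}
    (hM : ∀ x ∈ Ioo a b, ∫⁻ r in Ioc x b, F r ≤ M) : ∫⁻ r in Ioc a b, F r ≤ M := by
  rcases le_or_gt b a with hba | hab
  · simp [Ioc_eq_empty hba.not_gt]
  obtain ⟨u, hu_anti, hu_mem, hu_lim⟩ := exists_seq_strictAnti_tendsto' hab
  have hunion : ⋃ n, Ioc (u n) b = Ioc a b := by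
    simp only [← Ioi_inter_Iic, ← iUnion_inter]
    rw [(isGLB_of_tendsto_atTop hu_anti.antitone hu_lim).iUnion_Ioi_eq]
  have hmono : Monotone fun n ↦ Ioc (u n) b := fun _ _ hmn ↦
    Ioc_subset_Ioc_left (hu_anti.antitone hmn)
  rw [← hunion, setLIntegral_iUnion_of_directed F hmono.directed_le]
  exact iSup_le fun n ↦ hM (u n) (hu_mem n)

lemma setLIntegral_Ioc_mul_sq_le (hc : 0 ≤ c)
    (hh : ∀ r ∈ Ioc a b, HasDerivAt h (h' r) r) (hh' : ContinuousOn h' (Ioc a b))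
    (h_nonneg : ∀ r ∈ Ioc a b, 0 ≤ h r) (hpot : ∀ r ∈ Ioc a b, c * h r ≤ h' r)
    (hg : ContinuousOn g (Ioc a b)) (hg' : ∀ r ∈ Ioo a b, DifferentiableAt ℝ g r) (hgb : g b = 0) :
    ∫⁻ r in Ioc a b, .ofReal ((c * h' r - c ^ 2 * h r) * g r ^ 2) ≤
      ∫⁻ r in Ioc a b, .ofReal (h r * deriv g r ^ 2) := by
  refine setLIntegral_Ioc_le_of_forall fun x hx ↦ ?_
  have hsub : Icc x b ⊆ Ioc a b := fun r hr ↦ ⟨hx.1.trans_le hr.1, hr.2⟩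
  calc ∫⁻ r in Ioc x b, .ofReal ((c * h' r - c ^ 2 * h r) * g r ^ 2)
      ≤ ∫⁻ r in Ioc x b, .ofReal (h r * deriv g r ^ 2) :=
        setLIntegral_Icc_mul_sq_le hx.2.le hc (fun r hr ↦ hh r (hsub hr)) (hh'.mono hsub)
          (fun r hr ↦ h_nonneg r (hsub hr)) (fun r hr ↦ hpot r (hsub hr)) (hg.mono hsub)
          (fun r hr ↦ hg' r ⟨hx.1.trans hr.1, hr.2⟩) hgb
    _ ≤ ∫⁻ r in Ioc a b, .ofReal (h r * deriv g r ^ 2) :=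
        lintegral_mono_set (Ioc_subset_Ioc_left hx.1.le)

end WeightedInequality

section Comparison

open scoped ENNReal

variable {α β : Type*} [MeasurableSpace α] [MeasurableSpace β] {μ : Measure α} {ν : Measure β}

lemma lintegral_prod_mono_of_slices [SFinite μ] [SFinite ν] {F G : α × β → ℝ≥0∞}
    (hF : AEMeasurable F (μ.prod ν)) (hG : AEMeasurable G (μ.prod ν))
    (hFG : ∀ᵐ y ∂ν, ∫⁻ x, F (x, y) ∂μ ≤ ∫⁻ x, G (x, y) ∂μ) :
    ∫⁻ z, F z ∂μ.prod ν ≤ ∫⁻ z, G z ∂μ.prod ν := by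
  rw [lintegral_prod_symm F hF, lintegral_prod_symm G hG]
  exact lintegral_mono_ae hFG

lemma integrable_and_integral_le_of_lintegral_ofReal_le {u v : α → ℝ}
    (hu : AEStronglyMeasurable u μ) (hu_nonneg : 0 ≤ᵐ[μ] u) (hv : Integrable v μ)
    (hv_nonneg : 0 ≤ᵐ[μ] v) (huv : ∫⁻ x, .ofReal (u x) ∂μ ≤ ∫⁻ x, .ofReal (v x) ∂μ) :
    Integrable u μ ∧ ∫ x, u x ∂μ ≤ ∫ x, v x ∂μ := by
  have hv_fin : ∫⁻ x, .ofReal (v x) ∂μ ≠ ∞ :=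
    (lintegral_ofReal_ne_top_iff_integrable hv.1 hv_nonneg).2 hv
  refine ⟨(lintegral_ofReal_ne_top_iff_integrable hu hu_nonneg).1 (ne_top_of_le_ne_top hv_fin huv),
    ?_⟩
  rw [integral_eq_lintegral_of_nonneg_ae hu_nonneg hu,
    integral_eq_lintegral_of_nonneg_ae hv_nonneg hv.1]
  exact ENNReal.toReal_mono hv_fin huv

lemma integral_mul_sq_pos {w f : α → ℝ} (hw : ∀ x, 0 < w x)
    (hint : Integrable (fun x ↦ w x * f x ^ 2) μ) (hne : ¬ ∀ᵐ x ∂μ, f x = 0) :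
    0 < ∫ x, w x * f x ^ 2 ∂μ := by
  have hnonneg : ∀ x, 0 ≤ w x * f x ^ 2 := fun x ↦ mul_nonneg (hw x).le (sq_nonneg _)
  refine (integral_nonneg hnonneg).lt_of_ne' fun hzero ↦ hne ?_
  filter_upwards [(integral_eq_zero_iff_of_nonneg hnonneg hint).1 hzero] with x hx
  simpa [(hw x).ne'] using hx

end Comparison

section Cone

open Set

/-- The Dirichlet energy density of `f` on the cone `dρ² + ω⁻² sinh(ρ)² dθ²`, with respect to
`dρ dθ`: the factor `sinh ρ / ω` of the volume form is included. Points are `p = (ρ, θ)`. -/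
noncomputable def coneEnergyDensity (ω : ℝ) (f : ℝ × ℝ → ℝ) (p : ℝ × ℝ) : ℝ :=
  (deriv (fun r ↦ f (r, p.2)) p.1 ^ 2 +
    ω ^ 2 / sinh p.1 ^ 2 * deriv (fun t ↦ f (p.1, t)) p.2 ^ 2) * (sinh p.1 / ω)

variable {η ω : ℝ} {Θ : Set ℝ} {f : ℝ × ℝ → ℝ}

lemma radial_le_coneEnergyDensity (hω : 0 < ω) (f : ℝ × ℝ → ℝ) {p : ℝ × ℝ} (hp : 0 ≤ p.1) :
    sinh p.1 / ω * deriv (fun r ↦ f (r, p.2)) p.1 ^ 2 ≤ coneEnergyDensity ω f p := by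
  have hweight : 0 ≤ sinh p.1 / ω := div_nonneg (sinh_nonneg_iff.2 hp) hω.le
  rw [coneEnergyDensity, mul_comm]
  exact mul_le_mul_of_nonneg_right (le_add_of_nonneg_right (by positivity)) hweight

lemma coneEnergyDensity_nonneg (hω : 0 < ω) (f : ℝ × ℝ → ℝ) {p : ℝ × ℝ} (hp : 0 ≤ p.1) :
    0 ≤ coneEnergyDensity ω f p :=
  (mul_nonneg (div_nonneg (sinh_nonneg_iff.2 hp) hω.le) (sq_nonneg _)).trans
    (radial_le_coneEnergyDensity hω f hp)

/-- The weight in the Hardy-type inequality bounding the energy on the cone from below: the volume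
density `sinh ρ / ω` times `1/4`, plus the positive remainder `e^{-ρ} / (2ω)`. -/
noncomputable def coneHardyWeight (ω ρ : ℝ) : ℝ :=
  1 / 4 * (sinh ρ / ω) + exp (-ρ) / (2 * ω)

lemma coneHardyWeight_eq (ω ρ : ℝ) :
    coneHardyWeight ω ρ = 1 / 2 * (cosh ρ / ω) - (1 / 2) ^ 2 * (sinh ρ / ω) := by
  rw [coneHardyWeight, ← cosh_sub_sinh]
  ring

lemma coneHardyWeight_nonneg (hω : 0 < ω) {ρ : ℝ} (hρ : 0 ≤ ρ) : 0 ≤ coneHardyWeight ω ρ := by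
  have := sinh_nonneg_iff.2 hρ
  rw [coneHardyWeight]
  positivity

@[fun_prop]
lemma continuous_coneHardyWeight (ω : ℝ) : Continuous (coneHardyWeight ω) := by
  unfold coneHardyWeight
  fun_prop

lemma setLIntegral_coneHardyWeight_mul_sq_le (hω : 0 < ω) {g : ℝ → ℝ}
    (hg : ContinuousOn g (Ioc 0 η)) (hg' : ∀ r ∈ Ioo 0 η, DifferentiableAt ℝ g r) (hgη : g η = 0) :
    ∫⁻ r in Ioc 0 η, .ofReal (coneHardyWeight ω r * g r ^ 2) ≤
      ∫⁻ r in Ioc 0 η, .ofReal (sinh r / ω * deriv g r ^ 2) := by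
  have hsinh : ∀ r ∈ Ioc 0 η, 0 ≤ sinh r / ω := fun r hr ↦
    div_nonneg (sinh_nonneg_iff.2 hr.1.le) hω.le
  have hpot : ∀ r ∈ Ioc 0 η, 1 / 2 * (sinh r / ω) ≤ cosh r / ω := fun r hr ↦ by
    have := div_le_div_of_nonneg_right (sinh_lt_cosh r).le hω.le
    linarith [hsinh r hr]
  simpa only [coneHardyWeight_eq] using
    setLIntegral_Ioc_mul_sq_le one_half_pos.le (fun r _ ↦ (hasDerivAt_sinh r).div_const ω)
      (by fun_prop) hsinh hpot hg hg' hgη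

lemma setLIntegral_slice_coneHardyWeight_le_coneEnergyDensity (hω : 0 < ω)
    (hf : DifferentiableOn ℝ f (Ioc 0 η ×ˢ univ)) {θ : ℝ} (hbound : f (η, θ) = 0) :
    ∫⁻ r in Ioc 0 η, .ofReal (coneHardyWeight ω r * f (r, θ) ^ 2) ≤
      ∫⁻ r in Ioc 0 η, .ofReal (coneEnergyDensity ω f (r, θ)) := by
  have hslice : ContinuousOn (fun r ↦ f (r, θ)) (Ioc 0 η) :=
    hf.continuousOn.comp (by fun_prop) fun r hr ↦ ⟨hr, mem_univ θ⟩
  have hslice' : ∀ r ∈ Ioo 0 η, DifferentiableAt ℝ (fun r ↦ f (r, θ)) r := fun r hr ↦ by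
    have hf_at : DifferentiableAt ℝ f (r, θ) :=
      hf.differentiableAt (prod_mem_nhds (Ioc_mem_nhds hr.1 hr.2) univ_mem)
    exact hf_at.comp r (by fun_prop)
  refine (setLIntegral_coneHardyWeight_mul_sq_le hω hslice hslice' hbound).trans ?_
  exact setLIntegral_mono' measurableSet_Ioc fun r hr ↦
    ENNReal.ofReal_le_ofReal (radial_le_coneEnergyDensity hω f (p := (r, θ)) hr.1.le)

lemma integrableOn_and_integral_coneHardyWeight_mul_sq_le (hω : 0 < ω) (hΘ : MeasurableSet Θ)
    (hf : DifferentiableOn ℝ f (Ioc 0 η ×ˢ univ)) (hbound : ∀ θ ∈ Θ, f (η, θ) = 0)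
    (henergy : IntegrableOn (coneEnergyDensity ω f) (Ioc 0 η ×ˢ Θ)) :
    IntegrableOn (fun p ↦ coneHardyWeight ω p.1 * f p ^ 2) (Ioc 0 η ×ˢ Θ) ∧
      ∫ p in Ioc 0 η ×ˢ Θ, coneHardyWeight ω p.1 * f p ^ 2 ≤
        ∫ p in Ioc 0 η ×ˢ Θ, coneEnergyDensity ω f p := by
  have hS : MeasurableSet (Ioc 0 η ×ˢ Θ) := measurableSet_Ioc.prod hΘ
  have hvol : (volume : Measure (ℝ × ℝ)).restrict (Ioc 0 η ×ˢ Θ) =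
      (volume.restrict (Ioc 0 η)).prod (volume.restrict Θ) := by
    rw [Measure.prod_restrict, Measure.volume_eq_prod]
  have hf_cont : ContinuousOn f (Ioc 0 η ×ˢ Θ) :=
    hf.continuousOn.mono (prod_mono_right (subset_univ Θ))
  have hmeas : AEStronglyMeasurable (fun p ↦ coneHardyWeight ω p.1 * f p ^ 2)
      (volume.restrict (Ioc 0 η ×ˢ Θ)) :=
    ContinuousOn.aestronglyMeasurable (by fun_prop) hS
  refine integrable_and_integral_le_of_lintegral_ofReal_le hmeas ?_ henergy ?_ ?_
  · filter_upwards [ae_restrict_mem hS] with p hp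
    exact mul_nonneg (coneHardyWeight_nonneg hω hp.1.1.le) (sq_nonneg _)
  · filter_upwards [ae_restrict_mem hS] with p hp
    exact coneEnergyDensity_nonneg hω f hp.1.1.le
  · rw [IntegrableOn, hvol] at henergy
    rw [hvol] at hmeas ⊢
    refine lintegral_prod_mono_of_slices hmeas.aemeasurable.ennreal_ofReal
      henergy.aemeasurable.ennreal_ofReal ?_
    filter_upwards [ae_restrict_mem hΘ] with θ hθ
    exact setLIntegral_slice_coneHardyWeight_le_coneEnergyDensity hω hf (hbound θ hθ)

end Cone

theorem statement5_general {η ω : ℝ} (hω : 0 < ω) {Θ : Set ℝ} (hΘ : MeasurableSet Θ)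
    {f : ℝ × ℝ → ℝ} (hf : DifferentiableOn ℝ f (Set.Ioc 0 η ×ˢ Set.univ))
    (hbound : ∀ θ ∈ Θ, f (η, θ) = 0)
    (hne : ¬ ∀ᵐ p ∂volume.restrict (Set.Ioc 0 η ×ˢ Θ), f p = 0)
    (henergy : IntegrableOn (coneEnergyDensity ω f) (Set.Ioc 0 η ×ˢ Θ)) :
    IntegrableOn (fun p ↦ f p ^ 2 * (sinh p.1 / ω)) (Set.Ioc 0 η ×ˢ Θ) ∧
      1 / 4 * ∫ p in Set.Ioc 0 η ×ˢ Θ, f p ^ 2 * (sinh p.1 / ω) <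
        ∫ p in Set.Ioc 0 η ×ˢ Θ, coneEnergyDensity ω f p := by
  have hS : MeasurableSet (Set.Ioc 0 η ×ˢ Θ) := measurableSet_Ioc.prod hΘ
  have hf_cont : ContinuousOn f (Set.Ioc 0 η ×ˢ Θ) :=
    hf.continuousOn.mono (Set.prod_mono_right (Set.subset_univ Θ))
  obtain ⟨hint, hle⟩ := integrableOn_and_integral_coneHardyWeight_mul_sq_le hω hΘ hf hbound henergy
  have hint_rem : IntegrableOn (fun p ↦ exp (-p.1) / (2 * ω) * f p ^ 2) (Set.Ioc 0 η ×ˢ Θ) := by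
    refine hint.mono' (ContinuousOn.aestronglyMeasurable (by fun_prop) hS) ?_
    filter_upwards [ae_restrict_mem hS] with p hp
    have hsinh : 0 ≤ sinh p.1 := sinh_nonneg_iff.2 hp.1.1.le
    rw [Real.norm_of_nonneg (by positivity), coneHardyWeight]
    gcongr
    exact le_add_of_nonneg_left (by positivity)
  have hsplit (p : ℝ × ℝ) : f p ^ 2 * (sinh p.1 / ω) =
      4 * (coneHardyWeight ω p.1 * f p ^ 2 - exp (-p.1) / (2 * ω) * f p ^ 2) := by
    rw [coneHardyWeight]
    ring
  have hrem_pos := integral_mul_sq_pos (fun p ↦ by positivity) hint_rem hne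
  simp only [hsplit]
  refine ⟨(hint.sub hint_rem).const_mul 4, ?_⟩
  rw [integral_const_mul, integral_sub hint hint_rem]
  linarith

/-- variational form of the fact that the smallest Dirichlet eigenvalue of the
laplacian on the model hyperbolic cone `(0,η] × [0,2π]` with metric
`dρ² + ω⁻² sinh(ρ)² dθ²` is strictly bigger than `1/4`.  For a bounded, `2π`-periodic (in `θ`),
continuously differentiable function `f` vanishing at `ρ = η`, not almost everywhere zero, and
with finite Dirichlet energy, one has
`(1/4)·∫∫ f² ω⁻¹ sinh ρ dρ dθ < ∫∫ ((∂_ρ f)² + ω² sinh(ρ)⁻² (∂_θ f)²) ω⁻¹ sinh ρ dρ dθ`. -/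
theorem statement5 (η : ℝ) (hη : 0 < η) (ω : ℕ) (hω : 1 ≤ ω) (f : ℝ × ℝ → ℝ)
    (hbdd : ∃ C : ℝ, ∀ p : ℝ × ℝ, p.1 ∈ Set.Ioc 0 η → |f p| ≤ C)
    (hper : ∀ ρ θ : ℝ, f (ρ, θ + 2 * π) = f (ρ, θ))
    (hC1 : ContDiffOn ℝ 1 f (Set.Ioc 0 η ×ˢ (Set.univ : Set ℝ)))
    (hbound : ∀ θ : ℝ, f (η, θ) = 0)
    (hne : ¬ (∀ᵐ p ∂(volume.restrict (Set.Ioc 0 η ×ˢ Set.Icc 0 (2 * π))), f p = 0))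
    (henergy : IntegrableOn
      (fun p : ℝ × ℝ =>
        ((deriv (fun r => f (r, p.2)) p.1) ^ 2 +
          (ω : ℝ) ^ 2 / Real.sinh p.1 ^ 2 * (deriv (fun t => f (p.1, t)) p.2) ^ 2) *
          (Real.sinh p.1 / ω))
      (Set.Ioc 0 η ×ˢ Set.Icc 0 (2 * π)) volume) :
    (1 / 4) * ∫ p in Set.Ioc 0 η ×ˢ Set.Icc 0 (2 * π),
        f p ^ 2 * (Real.sinh p.1 / ω) <
      ∫ p in Set.Ioc 0 η ×ˢ Set.Icc 0 (2 * π),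
        ((deriv (fun r => f (r, p.2)) p.1) ^ 2 +
          (ω : ℝ) ^ 2 / Real.sinh p.1 ^ 2 * (deriv (fun t => f (p.1, t)) p.2) ^ 2) *
          (Real.sinh p.1 / ω) :=
  (statement5_general (Nat.cast_pos.2 hω) measurableSet_Icc (hC1.differentiableOn one_ne_zero)
    (fun θ _ ↦ hbound θ) hne henergy).2
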